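/- arXiv:1811.00049 — 2 statements merged into one kernel-verified Lean document; each statement's English description precedes it below -/
import Mathlib

section
/- Let L₀ ≤ μ_{q^n+1} be a subgroup of order r, and let s be the order of the subgroup L₀^m := {ξ^m : ξ ∈ L₀}. Then r = s·gcd(r,m). Moreover, for every subgroup L̄ ≤ M_ℓ satisfying ρ̄(L̄) = L₀^m there exists a subgroup L ≤ G such that π(L) = L̄, ρ(L) = L₀, and |L ∩ C_m| = gcd(r,m). -/
/-!
The group `L` consists of all products `N · diag(1,1,ξ)` with `N ∈ L̄`, `ξ ∈ L₀` and
`det N = ξ ^ m`: it is the fibre product of `L̄` and `L₀` over `L₀ ^ m`. Elements of `L̄` have block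
shape with `(3,3)` entry `1`, so they commute with `diag(1,1,ξ)` and `L` is a group; the condition
on determinants says exactly that the product lies in `G`. Surjectivity of `L → L̄` and `L → L₀`
is the hypothesis `ρ̄(L̄) = L₀ ^ m`. The intersection `L ∩ C_m` is the kernel of `ξ ↦ ξ ^ m` on the
cyclic group `L₀`, which has order `gcd(r, m)`; the identity `r = s · gcd(r, m)` is the order
formula for the same homomorphism.
-/


open Matrix

/-- The map `ρ` extracting the `(3,3)` entry of a matrix in `G`. -/
def rhoFun {E : Type*} [Field E] (M : GL (Fin 3) E) : E :=
  (M : Matrix (Fin 3) (Fin 3) E) 2 2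

/-- The map `π`, sending `M = α_{a,c,ξ}` to `M · diag(1,1,ξ)⁻¹`,
i.e. replacing the `(3,3)` entry by `1`. -/
def piMat {E : Type*} [Field E] (M : GL (Fin 3) E) : Matrix (Fin 3) (Fin 3) E :=
  (M : Matrix (Fin 3) (Fin 3) E) *
    Matrix.diagonal ![1, 1, ((M : Matrix (Fin 3) (Fin 3) E) 2 2)⁻¹]

/-- The carrier of `G = Aut(K_n)` as a set of invertible matrices. -/
def GSet (q n m : ℕ) {E : Type*} [Field E] (F : Subfield E) : Set (GL (Fin 3) E) :=
  {M | ∃ a c ξ : E, a ∈ F ∧ c ∈ F ∧ a ^ (q + 1) - c ^ (q + 1) = 1 ∧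
    ξ ^ (q ^ n + 1) = 1 ∧
    (M : Matrix (Fin 3) (Fin 3) E)
      = !![a, c ^ q * ξ ^ m, 0; c, a ^ q * ξ ^ m, 0; 0, 0, ξ]}

/-- The carrier of `S_ℓ ≅ SL(2,q)`, as a set of matrices. -/
def SMat (q : ℕ) {E : Type*} [Field E] (F : Subfield E) : Set (Matrix (Fin 3) (Fin 3) E) :=
  {A | ∃ a c : E, a ∈ F ∧ c ∈ F ∧ a ^ (q + 1) - c ^ (q + 1) = 1 ∧
    A = !![a, c ^ q, 0; c, a ^ q, 0; 0, 0, 1]}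

/-- The carrier of `S_ℓ × C_m = {α_{a,c,ξ} ∈ G : ξ^m = 1}`. -/
def SCmSet (q n m : ℕ) {E : Type*} [Field E] (F : Subfield E) : Set (GL (Fin 3) E) :=
  {M | M ∈ GSet q n m F ∧ rhoFun M ^ m = 1}

/-- The carrier of `C_m = ker π = {diag(1,1,ξ) : ξ^m = 1}`. -/
def CmSet (m : ℕ) {E : Type*} [Field E] : Set (GL (Fin 3) E) :=
  {M | ∃ ξ : E, ξ ^ m = 1 ∧
    (M : Matrix (Fin 3) (Fin 3) E) = Matrix.diagonal ![1, 1, ξ]}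

/-- The set `μ_k` of `k`-th roots of unity in `E`. -/
def muSet (k : ℕ) (E : Type*) [Field E] : Set E := {ξ | ξ ^ k = 1}

/-- The embedding `ξ ↦ diag(1,1,ξ)` of `Eˣ` into `GL(3,E)`. -/
def diagHom (E : Type*) [Field E] : Eˣ →* GL (Fin 3) E where
  toFun ξ :=
    { val := Matrix.diagonal ![1, 1, (ξ : E)]
      inv := Matrix.diagonal ![1, 1, ((ξ⁻¹ : Eˣ) : E)]
      val_inv := by
        ext i j
        fin_cases i <;> fin_cases j <;> simp
      inv_val := by
        ext i j
        fin_cases i <;> fin_cases j <;> simp }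
  map_one' := by
    ext i j
    fin_cases i <;> fin_cases j <;> simp
  map_mul' x y := by
    ext i j
    fin_cases i <;> fin_cases j <;> simp

lemma coe_diagHom {E : Type*} [Field E] (ξ : Eˣ) :
    (diagHom E ξ : Matrix (Fin 3) (Fin 3) E) = Matrix.diagonal ![1, 1, (ξ : E)] := rfl

/-- The explicit shape of the elements of `M_ℓ`; the parameter `ξ ^ m` of `α_{a,c,ξ}` is recovered
as the determinant. -/
lemma piMat_shape {q n m : ℕ} {E : Type*} [Field E] {F : Subfield E} {M : GL (Fin 3) E}
    (hM : M ∈ GSet q n m F) :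
    ∃ a c : E, a ∈ F ∧ c ∈ F ∧ a ^ (q + 1) - c ^ (q + 1) = 1 ∧
      piMat M = !![a, c ^ q * (piMat M).det, 0; c, a ^ q * (piMat M).det, 0; 0, 0, 1] := by
  obtain ⟨a, c, ξ, ha, hc, hac, hξ, hM⟩ := hM
  have hξ0 : ξ ≠ 0 := by
    rintro rfl
    simp at hξ
  have key : piMat M = !![a, c ^ q * ξ ^ m, 0; c, a ^ q * ξ ^ m, 0; 0, 0, 1] := by
    unfold piMat
    rw [hM]
    ext i j
    fin_cases i <;> fin_cases j <;> simp [hξ0]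
  have hdet : (piMat M).det = ξ ^ m := by
    rw [key, Matrix.det_fin_three]
    simp
    linear_combination ξ ^ m * hac
  exact ⟨a, c, ha, hc, hac, by rw [hdet, key]⟩

/-- In a finite cyclic group `L₀`, the `m`-torsion has order `gcd(|L₀|, m)`. -/
lemma card_torsion {E : Type*} [Field E] [Fintype E] (L₀ : Subgroup Eˣ) (m : ℕ) :
    Nat.card {ξ : Eˣ // ξ ∈ L₀ ∧ ξ ^ m = 1} = Nat.gcd (Nat.card L₀) m := by
  rw [← IsCyclic.card_powMonoidHom_ker (G := L₀) m]
  refine Nat.card_congr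
    { toFun := fun x => ⟨⟨x.1, x.2.1⟩, ?_⟩
      invFun := fun x => ⟨x.1.1, x.1.2, ?_⟩
      left_inv := fun _ => rfl
      right_inv := fun _ => rfl }
  · rw [MonoidHom.mem_ker]
    exact Subtype.ext x.2.2
  · exact congrArg Subtype.val (MonoidHom.mem_ker.1 x.2)

lemma card_map_pow_mul_gcd {E : Type*} [Field E] [Fintype E] (L₀ : Subgroup Eˣ) (m : ℕ) :
    Nat.card L₀ = Nat.card (L₀.map (powMonoidHom m)) * Nat.gcd (Nat.card L₀) m := by
  have h : L₀.map (powMonoidHom m) = ((powMonoidHom m : L₀ →* L₀).range).map L₀.subtype := by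
    ext x
    simp only [Subgroup.mem_map, MonoidHom.mem_range, powMonoidHom_apply]
    constructor
    · rintro ⟨y, hy, rfl⟩
      exact ⟨⟨y, hy⟩ ^ m, ⟨⟨y, hy⟩, rfl⟩, rfl⟩
    · rintro ⟨_, ⟨y, rfl⟩, rfl⟩
      exact ⟨y, y.2, rfl⟩
  rw [h, Subgroup.card_map_of_injective L₀.subtype_injective, IsCyclic.card_powMonoidHom_range,
    Nat.div_mul_cancel (Nat.gcd_dvd_left _ _)]

/-- The fibre product of `Lb` and `L₀` over `det N = ξ ^ m`, realised in `GL(3,E)` as the set of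
products `N · diag(1,1,ξ)`. -/
def liftGroup {E : Type*} [Field E] (m : ℕ) (L₀ : Subgroup Eˣ) (Lb : Subgroup (GL (Fin 3) E))
    (hcomm : ∀ N ∈ Lb, ∀ ξ : Eˣ, Commute N (diagHom E ξ)) : Subgroup (GL (Fin 3) E) where
  carrier := {M | ∃ N ∈ Lb, ∃ ξ ∈ L₀, Matrix.GeneralLinearGroup.det N = ξ ^ m ∧
    M = N * diagHom E ξ}
  one_mem' := ⟨1, Lb.one_mem, 1, L₀.one_mem, by simp, by simp⟩
  mul_mem' := by
    rintro _ _ ⟨N, hN, ξ, hξ, hd, rfl⟩ ⟨N', hN', ξ', hξ', hd', rfl⟩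
    refine ⟨N * N', Lb.mul_mem hN hN', ξ * ξ', L₀.mul_mem hξ hξ', ?_, ?_⟩
    · rw [map_mul, hd, hd', mul_pow]
    · rw [map_mul]
      exact (hcomm N' hN' ξ).symm.mul_mul_mul_comm N (diagHom E ξ')
  inv_mem' := by
    rintro _ ⟨N, hN, ξ, hξ, hd, rfl⟩
    refine ⟨N⁻¹, Lb.inv_mem hN, ξ⁻¹, L₀.inv_mem hξ, ?_, ?_⟩
    · rw [map_inv, hd, inv_pow]
    · rw [map_inv, (hcomm N hN ξ).eq, _root_.mul_inv_rev]

theorem stmt2 (p h n q m r s : ℕ) (hp : p.Prime) (hh : 1 ≤ h) (hq : q = p ^ h)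
    (hn1 : 1 ≤ n) (hodd : Odd n) (hm : m * (q + 1) = q ^ n + 1)
    {E : Type*} [Field E] [Fintype E] (hE : Fintype.card E = q ^ (2 * n))
    (F : Subfield E) (hF : Nat.card F = q ^ 2)
    (L₀ : Subgroup Eˣ) (hL₀ : ∀ ξ ∈ L₀, (ξ : E) ^ (q ^ n + 1) = 1)
    (hr : Nat.card L₀ = r)
    (hs : Nat.card (L₀.map (powMonoidHom m)) = s) :
    r = s * Nat.gcd r m ∧
    ∀ Lb : Subgroup (GL (Fin 3) E),
      (∀ N ∈ Lb, ∃ M ∈ GSet q n m F, (N : Matrix (Fin 3) (Fin 3) E) = piMat M) →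
      ((fun N : GL (Fin 3) E => (N : Matrix (Fin 3) (Fin 3) E).det)
          '' (Lb : Set (GL (Fin 3) E))
        = (fun ξ : Eˣ => (ξ : E) ^ m) '' (L₀ : Set Eˣ)) →
      ∃ L : Subgroup (GL (Fin 3) E),
        (L : Set (GL (Fin 3) E)) ⊆ GSet q n m F ∧
        piMat '' (L : Set (GL (Fin 3) E))
          = (fun N : GL (Fin 3) E => (N : Matrix (Fin 3) (Fin 3) E))
            '' (Lb : Set (GL (Fin 3) E)) ∧
        rhoFun '' (L : Set (GL (Fin 3) E)) = Units.val '' (L₀ : Set Eˣ) ∧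
        Nat.card ((L : Set (GL (Fin 3) E)) ∩ CmSet m : Set (GL (Fin 3) E))
          = Nat.gcd r m := by
  subst hr hs
  refine ⟨card_map_pow_mul_gcd L₀ m, fun Lb hLb hdet => ?_⟩
  have shape : ∀ N ∈ Lb, ∃ a c : E, a ∈ F ∧ c ∈ F ∧ a ^ (q + 1) - c ^ (q + 1) = 1 ∧
      (N : Matrix (Fin 3) (Fin 3) E) =
        !![a, c ^ q * (N : Matrix (Fin 3) (Fin 3) E).det, 0;
           c, a ^ q * (N : Matrix (Fin 3) (Fin 3) E).det, 0; 0, 0, 1] := by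
    intro N hN
    obtain ⟨M, hM, hNM⟩ := hLb N hN
    rw [hNM]
    exact piMat_shape hM
  have hcomm : ∀ N ∈ Lb, ∀ ξ : Eˣ, Commute N (diagHom E ξ) := by
    intro N hN ξ
    obtain ⟨a, c, -, -, -, h⟩ := shape N hN
    apply Units.ext
    rw [Units.val_mul, Units.val_mul, coe_diagHom, h]
    ext i j
    fin_cases i <;> fin_cases j <;> simp
  -- The projections of `N · diag(1,1,ξ)` to `L₀` and to `L̄`.
  have hrho : ∀ N ∈ Lb, ∀ ξ : Eˣ, rhoFun (N * diagHom E ξ) = ξ := by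
    intro N hN ξ
    obtain ⟨a, c, -, -, -, h⟩ := shape N hN
    unfold rhoFun
    rw [Units.val_mul, coe_diagHom, h]
    simp
  have hpi : ∀ N ∈ Lb, ∀ ξ : Eˣ,
      piMat (N * diagHom E ξ) = (N : Matrix (Fin 3) (Fin 3) E) := by
    intro N hN ξ
    have h2 := hrho N hN ξ
    unfold rhoFun at h2
    unfold piMat
    rw [h2, Units.val_mul, coe_diagHom, mul_assoc, Matrix.diagonal_mul_diagonal]
    have : (fun i => ![1, 1, (ξ : E)] i * ![1, 1, (ξ : E)⁻¹] i) = 1 := by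
      ext i
      fin_cases i <;> simp
    rw [this]
    simp
  have hdetU : ∀ (N : GL (Fin 3) E) (ξ : Eˣ), Matrix.GeneralLinearGroup.det N = ξ ^ m ↔
      (N : Matrix (Fin 3) (Fin 3) E).det = (ξ : E) ^ m := by
    intro N ξ
    rw [Units.ext_iff]
    simp
  refine ⟨liftGroup m L₀ Lb hcomm, ?_, ?_, ?_, ?_⟩
  · rintro _ ⟨N, hN, ξ, hξ, hd, rfl⟩
    obtain ⟨a, c, ha, hc, hac, h⟩ := shape N hN
    refine ⟨a, c, ξ, ha, hc, hac, hL₀ ξ hξ, ?_⟩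
    rw [(hdetU N ξ).1 hd] at h
    rw [Units.val_mul, coe_diagHom, h]
    ext i j
    fin_cases i <;> fin_cases j <;> simp
  · ext A
    constructor
    · rintro ⟨_, ⟨N, hN, ξ, hξ, hd, rfl⟩, rfl⟩
      exact ⟨N, hN, (hpi N hN ξ).symm⟩
    · rintro ⟨N, hN, rfl⟩
      obtain ⟨ξ, hξ, h⟩ := hdet.subset ⟨N, hN, rfl⟩
      exact ⟨_, ⟨N, hN, ξ, hξ, (hdetU N ξ).2 h.symm, rfl⟩, hpi N hN ξ⟩
  · ext x
    constructor
    · rintro ⟨_, ⟨N, hN, ξ, hξ, hd, rfl⟩, rfl⟩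
      exact ⟨ξ, hξ, (hrho N hN ξ).symm⟩
    · rintro ⟨ξ, hξ, rfl⟩
      obtain ⟨N, hN, h⟩ := hdet.superset ⟨ξ, hξ, rfl⟩
      exact ⟨_, ⟨N, hN, ξ, hξ, (hdetU N ξ).2 h, rfl⟩, hrho N hN ξ⟩
  · rw [← card_torsion L₀ m]
    symm
    have hinj : Function.Injective (diagHom E) := by
      intro x y hxy
      have := congrArg rhoFun hxy
      rw [← one_mul (diagHom E x), ← one_mul (diagHom E y), hrho 1 Lb.one_mem,
        hrho 1 Lb.one_mem] at this
      exact Units.ext this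
    have hset : ((liftGroup m L₀ Lb hcomm : Set (GL (Fin 3) E)) ∩ CmSet m)
        = diagHom E '' {ξ : Eˣ | ξ ∈ L₀ ∧ ξ ^ m = 1} := by
      ext M
      constructor
      · rintro ⟨⟨N, hN, ξ, hξ, hd, rfl⟩, ζ, hζ, h⟩
        have hζξ : ζ = ξ := by
          have h2 := hrho N hN ξ
          unfold rhoFun at h2
          rw [h] at h2
          simpa using h2
        subst hζξ
        have hN1 : N = 1 := by
          rw [← coe_diagHom] at h
          exact mul_eq_right.1 (Units.ext h)
        refine ⟨ξ, ⟨hξ, ?_⟩, by rw [hN1, one_mul]⟩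
        exact Units.ext (by simpa using hζ)
      · rintro ⟨ξ, ⟨hξ, h1⟩, rfl⟩
        refine ⟨⟨1, Lb.one_mem, ξ, hξ, by simp [h1], (one_mul _).symm⟩, ξ, ?_, rfl⟩
        simpa using congrArg Units.val h1
    rw [hset]
    exact (Nat.card_image_of_injective hinj _).symm
end

section
/- Let w be a divisor of q+1 and let L̄ ≤ M_ℓ be a subgroup such that |L̄ ∩ Z| = w and the quotient L̄/(L̄ ∩ Z) is isomorphic to SL(2,2) (equivalently, to the symmetric group on 3 letters). If h is even, then the number N of orbits of L̄ acting on O equals (q+8)/6 + (q/2)·((q−1)/3)·((q+1)/w). If h is odd and 3 ∤ w, then N = (q+4)/6 + (q³−q)/(6w). -/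
/-!
The orbits of `L` on the Hermitian curve are counted with Burnside's lemma. The curve consists of
`q ^ 3 - q` affine points `(x : y : 1)` with `x ^ (q + 1) - y ^ (q + 1) = 1` and `q + 1` points
`(1 : u : 0)` at infinity with `u ^ (q + 1) = 1`.

Under either hypothesis on `h`, `3` does not divide `w`, and then `L` acts freely on the affine
points (`eq_one_of_fixed`). Indeed an element `g` fixing `(x, y)` also preserves the orthogonal
direction `(y ^ q, x ^ q)`, so it is diagonalizable with eigenvalues `1` and `τ = det g`, of odd
order. Its image in the symmetric group then has order dividing `3`, so `g ^ 3` is scalar and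
`τ ^ 3 = 1`. That image is conjugate to its inverse, so `t * g * t⁻¹ * g` is a scalar of `L` for
some `t` in `L`; comparing determinants, this scalar is `τ`, so `τ ^ w = 1` and `τ = 1`.

At infinity, `g` fixes `(1 : u : 0)` exactly when `u` is a root of a quadratic polynomial with
middle coefficient `B`, the trace. Scalars fix all `q + 1` points. Nonscalar elements with scalar
square have `B = 0`, hence exactly one fixed point. Nonscalar elements with scalar cube have
`B ^ 2 = τ`; a linear substitution turns the quadratic into `z ^ 2 + z + 1`, and the roots have
norm one exactly when `z ^ q = z`, that is, when `h` is even. Such elements therefore fix two points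
for even `h` and none for odd `h`. The Burnside sum is
`6 * w * N = (q ^ 3 - q) + w * ((q + 1) + 3 + 2 * e)` with `e = 2` or `e = 0`
(`numOrbits_formula`).
-/

open Matrix

noncomputable def glAct {F : Type*} [Field F] (M : GL (Fin 3) F)
    (x : Projectivization F (Fin 3 → F)) : Projectivization F (Fin 3 → F) :=
  Projectivization.map
    ((LinearMap.GeneralLinearGroup.generalLinearEquiv F (Fin 3 → F)
        (Matrix.GeneralLinearGroup.toLin M)).toLinearMap)
    ((LinearMap.GeneralLinearGroup.generalLinearEquiv F (Fin 3 → F)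
        (Matrix.GeneralLinearGroup.toLin M)).injective) x

noncomputable def numOrbits {F : Type*} [Field F] (L : Subgroup (GL (Fin 3) F))
    (O : Set (Projectivization F (Fin 3 → F))) : ℕ :=
  Nat.card ((fun x => {y | ∃ g ∈ L, glAct g x = y}) '' O :
    Set (Set (Projectivization F (Fin 3 → F))))

def hermitianPts (q : ℕ) (F : Type*) [Field F] : Set (Projectivization F (Fin 3 → F)) :=
  {x | x.rep 1 ^ (q + 1) = x.rep 0 ^ (q + 1) - x.rep 2 ^ (q + 1)}

def MlSet (q : ℕ) (F : Type*) [Field F] : Set (GL (Fin 3) F) :=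
  {M | ∃ a c τ : F, a ^ (q + 1) - c ^ (q + 1) = 1 ∧ τ ^ (q + 1) = 1 ∧
    (M : Matrix (Fin 3) (Fin 3) F) = !![a, τ * c ^ q, 0; c, τ * a ^ q, 0; 0, 0, 1]}

def ZSet (q : ℕ) (F : Type*) [Field F] : Set (GL (Fin 3) F) :=
  {M | ∃ ε : F, ε ^ (q + 1) = 1 ∧ (M : Matrix (Fin 3) (Fin 3) F) = Matrix.diagonal ![ε, ε, 1]}

/-! ### Norms in a field with `q ^ 2` elements -/

section FieldCount
variable {F : Type*} [Field F] [Fintype F] {h q : ℕ}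

lemma two_eq_zero_of_card (hh : 1 ≤ h) (hq : q = 2 ^ h) (hF : Fintype.card F = q ^ 2) :
    (2 : F) = 0 := by
  have h1 : ((Fintype.card F : ℕ) : F) = 0 := FiniteField.cast_card_eq_zero F
  rw [hF, hq] at h1
  push_cast at h1
  exact pow_eq_zero_iff (by omega) |>.1 (pow_eq_zero_iff (two_ne_zero) |>.1 h1)

lemma add_pow_q {F : Type*} [Field F] (hq : q = 2 ^ h) (h2 : (2 : F) = 0) (x y : F) :
    (x + y) ^ q = x ^ q + y ^ q := by
  have : CharP F 2 := CharTwo.of_one_ne_zero_of_two_eq_zero one_ne_zero h2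
  rw [hq]; exact add_pow_char_pow x y 2 h

lemma pow_q_pow_q (hF : Fintype.card F = q ^ 2) (x : F) : (x ^ q) ^ q = x := by
  rw [← pow_mul, ← sq, ← hF, FiniteField.pow_card]

lemma sq_inj_char_two {F : Type*} [Field F] (h2 : (2 : F) = 0) {x y : F} (hxy : x ^ 2 = y ^ 2) : x = y := by
  have : (x - y) ^ 2 = 0 := by linear_combination hxy - (x * y - y ^ 2) * h2
  exact sub_eq_zero.1 (pow_eq_zero_iff two_ne_zero |>.1 this)

lemma card_units_eq (hF : Fintype.card F = q ^ 2) : Nat.card Fˣ = (q - 1) * (q + 1) := by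
  rw [Nat.card_units, Nat.card_eq_fintype_card, hF, mul_comm, ← Nat.sq_sub_sq, one_pow]

/-- Surjectivity of the norm onto the nonzero elements of the subfield of order `q`. -/
lemma exists_pow_succ_eq (hq1 : 1 < q) (hF : Fintype.card F = q ^ 2) (b : F)
    (hb : b ^ (q - 1) = 1) : ∃ x : F, x ^ (q + 1) = b := by
  have hb0 : b ≠ 0 := by
    rintro rfl
    rw [zero_pow (by omega)] at hb
    exact zero_ne_one hb
  have hc := card_units_eq hF
  have hle : (powMonoidHom (q + 1) : Fˣ →* Fˣ).range ≤ (powMonoidHom (q - 1) : Fˣ →* Fˣ).ker := by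
    rintro _ ⟨x, rfl⟩
    rw [MonoidHom.mem_ker, powMonoidHom_apply, powMonoidHom_apply, ← pow_mul, mul_comm, ← hc,
      pow_card_eq_one']
  have heq := Subgroup.eq_of_le_of_card_ge hle (by
    rw [IsCyclic.card_powMonoidHom_range, IsCyclic.card_powMonoidHom_ker, hc, Nat.gcd_mul_left_left,
      Nat.gcd_mul_right_left, Nat.mul_div_cancel _ (by omega)])
  have : Units.mk0 b hb0 ∈ (powMonoidHom (q + 1) : Fˣ →* Fˣ).range := by
    rw [heq, MonoidHom.mem_ker]
    ext; simpa using hb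
  obtain ⟨x, hx⟩ := this
  exact ⟨x, by simpa using congrArg Units.val hx⟩

lemma ncard_norm_one (hF : Fintype.card F = q ^ 2) :
    {u : F | u ^ (q + 1) = 1}.ncard = q + 1 := by
  have hk : Nat.card (powMonoidHom (q + 1) : Fˣ →* Fˣ).ker = q + 1 := by
    rw [IsCyclic.card_powMonoidHom_ker, card_units_eq hF, Nat.gcd_mul_left_left]
  have : {u : F | u ^ (q + 1) = 1} =
      (fun u : Fˣ => (u : F)) '' ((powMonoidHom (q + 1) : Fˣ →* Fˣ).ker : Set Fˣ) := by
    ext u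
    simp only [Set.mem_ofPred_eq, Set.mem_image, SetLike.mem_coe, MonoidHom.mem_ker,
      powMonoidHom_apply]
    constructor
    · intro hu
      exact ⟨Units.mk0 u (by rintro rfl; simp at hu), by ext; simpa using hu, rfl⟩
    · rintro ⟨v, hv, rfl⟩
      simpa using congrArg Units.val hv
  rw [this, Set.ncard_image_of_injective _ Units.val_injective]
  exact hk

lemma ncard_norm_eq (hq1 : 1 < q) (hF : Fintype.card F = q ^ 2) (b : F) (hb : b ^ q = b)
    (hb0 : b ≠ 0) : {x : F | x ^ (q + 1) = b}.ncard = q + 1 := by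
  obtain ⟨x, hx⟩ := exists_pow_succ_eq hq1 hF b (by
    apply mul_left_cancel₀ hb0
    rw [← pow_succ', Nat.sub_add_cancel hq1.le, hb, mul_one])
  have hx0 : x ≠ 0 := by rintro rfl; simp at hx; exact hb0 hx.symm
  have : {y : F | y ^ (q + 1) = b} = (fun u => x * u) '' {u : F | u ^ (q + 1) = 1} := by
    ext y
    simp only [Set.mem_ofPred_eq, Set.mem_image]
    constructor
    · intro hy
      refine ⟨y / x, ?_, by field_simp⟩
      rw [div_pow, hy, hx, div_self hb0]
    · rintro ⟨u, hu, rfl⟩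
      rw [mul_pow, hu, hx, mul_one]
  rw [this, Set.ncard_image_of_injective _ (mul_right_injective₀ hx0), ncard_norm_one hF]

/-- The Hermitian curve has `q ^ 3 - q` affine points. -/
lemma ncard_affine (hq : q = 2 ^ h) (hq1 : 1 < q) (h2 : (2 : F) = 0)
    (hF : Fintype.card F = q ^ 2) :
    {p : F × F | p.1 ^ (q + 1) - p.2 ^ (q + 1) = 1}.ncard = q ^ 3 - q := by
  classical
  have hfib : ∀ y : F, (Finset.univ.filter
      (fun p : F × F => p.1 ^ (q + 1) - p.2 ^ (q + 1) = 1 ∧ p.2 = y)).card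
        = if y ^ (q + 1) = 1 then 1 else q + 1 := by
    intro y
    have e1 : (Finset.univ.filter
      (fun p : F × F => p.1 ^ (q + 1) - p.2 ^ (q + 1) = 1 ∧ p.2 = y)).card
        = {x : F | x ^ (q + 1) = 1 + y ^ (q + 1)}.ncard := by
      rw [← Set.ncard_coe_finset, ← Set.ncard_image_of_injective
        {x : F | x ^ (q + 1) = 1 + y ^ (q + 1)} (Prod.mk_left_injective y)]
      congr 1
      ext ⟨a, b⟩
      simp only [Finset.coe_filter, Finset.mem_univ, true_and, Set.mem_ofPred_eq, Set.mem_image,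
        Prod.mk.injEq, sub_eq_iff_eq_add]
      constructor
      · rintro ⟨h1, rfl⟩; exact ⟨a, h1, rfl, rfl⟩
      · rintro ⟨x, h1, rfl, rfl⟩; exact ⟨h1, rfl⟩
    rw [e1]
    split_ifs with hy
    · rw [Set.ncard_eq_one]
      refine ⟨0, ?_⟩
      ext x
      simp only [Set.mem_ofPred_eq, Set.mem_singleton_iff]
      rw [hy, one_add_one_eq_two, h2, pow_eq_zero_iff (by omega)]
    · apply ncard_norm_eq hq1 hF
      · rw [add_pow_q hq h2, one_pow, ← pow_mul, mul_comm, pow_mul, pow_succ, pow_q_pow_q hF, pow_succ,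
          mul_comm]
      · intro h0
        exact hy (by linear_combination h0 - h2)
  have hN : (Finset.univ.filter (fun y : F => y ^ (q + 1) = 1)).card = q + 1 := by
    rw [← Set.ncard_coe_finset]
    simpa using ncard_norm_one hF
  have hN' := Finset.card_filter_add_card_filter_not (s := (Finset.univ : Finset F))
    (fun y : F => y ^ (q + 1) = 1)
  rw [hN, Finset.card_univ, hF] at hN'
  have : {p : F × F | p.1 ^ (q + 1) - p.2 ^ (q + 1) = 1} = ((Finset.univ.filter
      (fun p : F × F => p.1 ^ (q + 1) - p.2 ^ (q + 1) = 1) : Finset (F × F)) : Set (F × F)) := by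
    simp
  rw [this, Set.ncard_coe_finset, Finset.card_eq_sum_card_fiberwise (f := Prod.snd)
    (t := Finset.univ) (by simp)]
  simp only [Finset.filter_filter, hfib]
  rw [Finset.sum_ite, Finset.sum_const, Finset.sum_const, hN]
  have hle : q ≤ q ^ 3 := Nat.le_self_pow (by norm_num) q
  simp only [smul_eq_mul]
  zify [hle]
  zify at hN'
  linear_combination ((q:ℤ) + 1) * hN'
end FieldCount

/-! ### The projective action and Burnside's lemma -/

section Action
variable {F : Type*} [Field F]

lemma glAct_mk (M : GL (Fin 3) F) (v : Fin 3 → F) (hv : v ≠ 0)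
    (hv' : (M : Matrix (Fin 3) (Fin 3) F) *ᵥ v ≠ 0) :
    glAct M (Projectivization.mk F v hv)
      = Projectivization.mk F ((M : Matrix (Fin 3) (Fin 3) F) *ᵥ v) hv' := rfl

lemma mulVec_ne_zero_of_GL (M : GL (Fin 3) F) {v : Fin 3 → F} (hv : v ≠ 0) :
    (M : Matrix (Fin 3) (Fin 3) F) *ᵥ v ≠ 0 := by
  intro h
  apply hv
  have : (((M⁻¹ : GL (Fin 3) F) : Matrix (Fin 3) (Fin 3) F) *
      (M : Matrix (Fin 3) (Fin 3) F)) *ᵥ v = 0 := by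
    rw [← Matrix.mulVec_mulVec, h, Matrix.mulVec_zero]
  rwa [← Units.val_mul, inv_mul_cancel, Units.val_one, Matrix.one_mulVec] at this

lemma glAct_one (x : Projectivization F (Fin 3 → F)) : glAct (1 : GL (Fin 3) F) x = x := by
  induction x using Projectivization.ind with
  | h v hv =>
    rw [glAct_mk _ _ _ (mulVec_ne_zero_of_GL _ hv)]
    simp

lemma glAct_mul (M N : GL (Fin 3) F) (x : Projectivization F (Fin 3 → F)) :
    glAct (M * N) x = glAct M (glAct N x) := by
  induction x using Projectivization.ind with
  | h v hv =>
    have h1 := mulVec_ne_zero_of_GL N hv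
    rw [glAct_mk _ _ _ (mulVec_ne_zero_of_GL _ hv), glAct_mk _ _ _ h1,
      glAct_mk _ _ _ (mulVec_ne_zero_of_GL _ h1)]
    simp [Matrix.mulVec_mulVec]

lemma mk_mem_hermitianPts (q : ℕ) (v : Fin 3 → F) (hv : v ≠ 0) :
    Projectivization.mk F v hv ∈ hermitianPts q F ↔
      v 1 ^ (q + 1) = v 0 ^ (q + 1) - v 2 ^ (q + 1) := by
  obtain ⟨a, ha⟩ := Projectivization.exists_smul_eq_mk_rep F v hv
  have ha0 : (a : F) ^ (q + 1) ≠ 0 := pow_ne_zero _ a.ne_zero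
  simp only [hermitianPts, Set.mem_ofPred_eq, ← ha, Pi.smul_apply, Units.smul_def, smul_eq_mul, mul_pow]
  rw [← mul_sub, mul_right_inj' ha0]

/-- Burnside's lemma for `numOrbits`, for a set preserved by the group. -/
lemma numOrbits_mul_card [Finite F] (L : Subgroup (GL (Fin 3) F))
    (O : Set (Projectivization F (Fin 3 → F))) (hO : ∀ g ∈ L, ∀ x ∈ O, glAct g x ∈ O) [Fintype L] :
    numOrbits L O * Nat.card L = ∑ g : L, {x ∈ O | glAct (g : GL (Fin 3) F) x = x}.ncard := by
  classical
  let _ : MulAction L O :=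
    { smul := fun g x => ⟨glAct (g : GL (Fin 3) F) x, hO g g.2 x x.2⟩
      one_smul := fun x => Subtype.ext (glAct_one _)
      mul_smul := fun g k x => Subtype.ext (glAct_mul _ _ _) }
  have hsm : ∀ (g : L) (x : O), ((g • x : O) : Projectivization F (Fin 3 → F))
      = glAct (g : GL (Fin 3) F) x := fun _ _ => rfl
  have : Finite (Projectivization F (Fin 3 → F)) := inferInstance
  have := Fintype.ofFinite O
  have := Fintype.ofFinite (Quotient (MulAction.orbitRel L O))
  have hB := MulAction.sum_card_fixedBy_eq_card_orbits_mul_card_group L O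
  rw [Nat.card_eq_fintype_card (α := L)]
  have hnum : numOrbits L O = Fintype.card (Quotient (MulAction.orbitRel L O)) := by
    let f : O → Set (Projectivization F (Fin 3 → F)) :=
      fun x => {y | ∃ g ∈ L, glAct g x = y}
    have hker : Setoid.ker f = MulAction.orbitRel L O := by
      ext x y
      rw [Setoid.ker_def, MulAction.orbitRel_apply, MulAction.mem_orbit_iff]
      constructor
      · intro hxy
        have hx : (x : Projectivization F (Fin 3 → F)) ∈ f x := ⟨1, L.one_mem, glAct_one _⟩
        rw [hxy] at hx
        obtain ⟨g, hg, hgx⟩ := hx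
        exact ⟨⟨g, hg⟩, Subtype.ext hgx⟩
      · rintro ⟨g, rfl⟩
        ext z
        constructor
        · rintro ⟨k, hk, rfl⟩
          exact ⟨k * g, L.mul_mem hk g.2, by rw [glAct_mul, hsm]⟩
        · rintro ⟨k, hk, rfl⟩
          refine ⟨k * (g : GL (Fin 3) F)⁻¹, L.mul_mem hk (L.inv_mem g.2), ?_⟩
          rw [hsm, ← glAct_mul, inv_mul_cancel_right]
    rw [← Nat.card_eq_fintype_card, ← hker, Nat.card_congr (Setoid.quotientKerEquivRange f)]
    unfold numOrbits
    have : (fun x => {y | ∃ g ∈ L, glAct g x = y}) '' O = Set.range f := by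
      rw [Set.image_eq_range]
    rw [this]
  rw [hnum, ← hB]
  apply Finset.sum_congr rfl
  intro g _
  rw [← Nat.card_eq_fintype_card, Nat.card_coe_set_eq, ← Set.ncard_image_of_injective _ Subtype.val_injective]
  congr 1
  ext x
  simp only [Set.mem_image, MulAction.mem_fixedBy, Subtype.exists, exists_and_right, exists_eq_right,
    Set.mem_ofPred_eq, Subtype.ext_iff, hsm]
  constructor
  · rintro ⟨h1, h2⟩; exact ⟨h1, h2⟩
  · rintro ⟨h1, h2⟩; exact ⟨h1, h2⟩

end Action

/-! ### Affine points and points at infinity -/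

section Fixed
variable {F : Type*} [Field F] {h q : ℕ}

lemma vec_affine_ne_zero (x y : F) : (![x, y, 1] : Fin 3 → F) ≠ 0 := fun h0 => by
  simpa using congrFun h0 2

lemma vec_infinity_ne_zero (u : F) : (![1, u, 0] : Fin 3 → F) ≠ 0 := fun h0 => by
  simpa using congrFun h0 0

/-- The point `(x : y : 1)`. -/
def affinePt (p : F × F) : Projectivization F (Fin 3 → F) :=
  Projectivization.mk F ![p.1, p.2, 1] (vec_affine_ne_zero _ _)

/-- The point `(1 : u : 0)` of the line at infinity. -/
def infinityPt (u : F) : Projectivization F (Fin 3 → F) :=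
  Projectivization.mk F ![1, u, 0] (vec_infinity_ne_zero _)

lemma affinePt_injective : Function.Injective (affinePt : F × F → _) := by
  rintro ⟨x, y⟩ ⟨x', y'⟩ hxy
  obtain ⟨r, hr⟩ := (Projectivization.mk_eq_mk_iff' F _ _ _ _).1 hxy
  have h0 := congrFun hr 0
  have h1 := congrFun hr 1
  have h2 := congrFun hr 2
  simp at h0 h1 h2
  subst h2
  simp_all

lemma infinityPt_injective : Function.Injective (infinityPt : F → _) := by
  intro u u' hxy
  obtain ⟨r, hr⟩ := (Projectivization.mk_eq_mk_iff' F _ _ _ _).1 hxy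
  have h0 := congrFun hr 0
  have h1 := congrFun hr 1
  simp at h0 h1
  subst h0
  simp_all

lemma affinePt_ne_infinityPt (p : F × F) (u : F) : affinePt p ≠ infinityPt u := by
  intro hxy
  obtain ⟨r, hr⟩ := (Projectivization.mk_eq_mk_iff' F _ _ _ _).1 hxy
  simpa using congrFun hr 2

lemma affinePt_mem (p : F × F) :
    affinePt p ∈ hermitianPts q F ↔ p.1 ^ (q + 1) - p.2 ^ (q + 1) = 1 := by
  rw [affinePt, mk_mem_hermitianPts]
  simp only [Matrix.cons_val_zero, Matrix.cons_val_one, Matrix.cons_val, one_pow]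
  constructor <;> intro h0 <;> linear_combination -h0

lemma infinityPt_mem (u : F) : infinityPt u ∈ hermitianPts q F ↔ u ^ (q + 1) = 1 := by
  rw [infinityPt, mk_mem_hermitianPts]
  simp

/-- Every point of the Hermitian curve is affine or lies at infinity with nonzero first
coordinate. -/
lemma mem_hermitianPts_cases {z : Projectivization F (Fin 3 → F)} (hz : z ∈ hermitianPts q F) :
    (∃ p, z = affinePt p) ∨ ∃ u, z = infinityPt u := by
  induction z using Projectivization.ind with
  | h v hv =>
    rw [mk_mem_hermitianPts] at hz
    by_cases h2 : v 2 = 0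
    · right
      have h0 : v 0 ≠ 0 := by
        intro h0
        rw [h0, h2, sub_self, pow_eq_zero_iff (by omega)] at hz
        exact hv (by ext i; fin_cases i <;> simp [h0, h2, hz])
      refine ⟨v 1 / v 0, (Projectivization.mk_eq_mk_iff' F _ _ _ _).2 ⟨v 0, ?_⟩⟩
      ext i; fin_cases i
      · simp
      · simp; field_simp
      · simp [h2]
    · left
      refine ⟨(v 0 / v 2, v 1 / v 2), (Projectivization.mk_eq_mk_iff' F _ _ _ _).2 ⟨v 2, ?_⟩⟩
      ext i; fin_cases i
      · simp; field_simp
      · simp; field_simp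
      · simp

variable {M : GL (Fin 3) F} {a c τ : F}

lemma glAct_affinePt
    (hM : (M : Matrix (Fin 3) (Fin 3) F) = !![a, τ * c ^ q, 0; c, τ * a ^ q, 0; 0, 0, 1])
    (p : F × F) :
    glAct M (affinePt p) = affinePt (a * p.1 + τ * c ^ q * p.2, c * p.1 + τ * a ^ q * p.2) := by
  rw [affinePt, glAct_mk _ _ _ (mulVec_ne_zero_of_GL _ (vec_affine_ne_zero _ _)), affinePt]
  congr 1
  rw [hM]
  ext i; fin_cases i <;> simp [Matrix.mulVec, dotProduct, Fin.sum_univ_three]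

lemma glAct_infinityPt_eq_iff
    (hM : (M : Matrix (Fin 3) (Fin 3) F) = !![a, τ * c ^ q, 0; c, τ * a ^ q, 0; 0, 0, 1])
    (u : F) :
    glAct M (infinityPt u) = infinityPt u ↔ c + τ * a ^ q * u = (a + τ * c ^ q * u) * u := by
  rw [infinityPt, glAct_mk _ _ _ (mulVec_ne_zero_of_GL _ (vec_infinity_ne_zero _)),
    Projectivization.mk_eq_mk_iff', hM]
  constructor
  · rintro ⟨r, hr⟩
    have h0 := congrFun hr 0
    have h1 := congrFun hr 1
    simp [Matrix.mulVec, dotProduct, Fin.sum_univ_three] at h0 h1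
    rw [← h0, ← h1]
  · intro hu
    refine ⟨a + τ * c ^ q * u, ?_⟩
    ext i; fin_cases i <;> simp [Matrix.mulVec, dotProduct, Fin.sum_univ_three, hu]

lemma ncard_fixed [Finite F]
    (hM : (M : Matrix (Fin 3) (Fin 3) F) = !![a, τ * c ^ q, 0; c, τ * a ^ q, 0; 0, 0, 1]) :
    {x ∈ hermitianPts q F | glAct M x = x}.ncard =
      {p : F × F | p.1 ^ (q + 1) - p.2 ^ (q + 1) = 1 ∧ glAct M (affinePt p) = affinePt p}.ncard +
      {u : F | u ^ (q + 1) = 1 ∧ c + τ * a ^ q * u = (a + τ * c ^ q * u) * u}.ncard := by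
  rw [← Set.ncard_image_of_injective _ affinePt_injective,
    ← Set.ncard_image_of_injective {u : F | _} infinityPt_injective, ← Set.ncard_union_eq]
  · congr 1
    ext z
    simp only [Set.mem_ofPred_eq, Set.mem_union, Set.mem_image]
    constructor
    · rintro ⟨hz, hf⟩
      rcases mem_hermitianPts_cases hz with ⟨p, rfl⟩ | ⟨u, rfl⟩
      · exact Or.inl ⟨p, ⟨(affinePt_mem p).1 hz, hf⟩, rfl⟩
      · exact Or.inr ⟨u, ⟨(infinityPt_mem u).1 hz, (glAct_infinityPt_eq_iff hM u).1 hf⟩, rfl⟩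
    · rintro (⟨p, ⟨h1, h2⟩, rfl⟩ | ⟨u, ⟨h1, h2⟩, rfl⟩)
      · exact ⟨(affinePt_mem p).2 h1, h2⟩
      · exact ⟨(infinityPt_mem u).2 h1, (glAct_infinityPt_eq_iff hM u).2 h2⟩
  · rw [Set.disjoint_left]
    rintro _ ⟨p, _, rfl⟩ ⟨u, _, hu⟩
    exact affinePt_ne_infinityPt p u hu.symm

end Fixed

/-! ### Invariance of the Hermitian curve -/

section Preserve
variable {F : Type*} [Field F] [Fintype F] {h q : ℕ} {M : GL (Fin 3) F} {a c τ : F}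

lemma unitary_form (hq : q = 2 ^ h) (h2 : (2 : F) = 0) (hF : Fintype.card F = q ^ 2)
    (hac : a ^ (q + 1) - c ^ (q + 1) = 1) (hτ : τ ^ (q + 1) = 1) (x y : F) :
    (a * x + τ * c ^ q * y) ^ (q + 1) - (c * x + τ * a ^ q * y) ^ (q + 1)
      = x ^ (q + 1) - y ^ (q + 1) := by
  simp only [pow_succ, add_pow_q hq h2, mul_pow, pow_q_pow_q hF] at *
  linear_combination (x ^ q * x - τ ^ q * τ * y ^ q * y) * hac - y ^ q * y * hτ

lemma glAct_mem_hermitianPts (hq : q = 2 ^ h) (h2 : (2 : F) = 0) (hF : Fintype.card F = q ^ 2)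
    (hM : M ∈ MlSet q F) {x : Projectivization F (Fin 3 → F)} (hx : x ∈ hermitianPts q F) :
    glAct M x ∈ hermitianPts q F := by
  obtain ⟨a, c, τ, hac, hτ, hM⟩ := hM
  induction x using Projectivization.ind with
  | h v hv =>
    rw [glAct_mk _ _ _ (mulVec_ne_zero_of_GL _ hv)]
    rw [mk_mem_hermitianPts] at hx ⊢
    have := unitary_form hq h2 hF hac hτ (v 0) (v 1)
    simp only [hM, Matrix.mulVec, dotProduct, Fin.sum_univ_three]
    simp
    linear_combination hx - this

end Preserve

/-! ### Elements that are scalar up to a square or a cube -/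

section Scalars
variable {F : Type*} [Field F] {q : ℕ} {M : GL (Fin 3) F} {a c τ : F}

lemma mem_ZSet_iff
    (hM : (M : Matrix (Fin 3) (Fin 3) F) = !![a, τ * c ^ q, 0; c, τ * a ^ q, 0; 0, 0, 1])
    (hq0 : q ≠ 0) (hac : a ^ (q + 1) - c ^ (q + 1) = 1) :
    M ∈ ZSet q F ↔ c = 0 ∧ a = τ * a ^ q := by
  constructor
  · rintro ⟨ε, hε, h1⟩
    rw [hM] at h1
    have h00 := congrFun (congrFun h1 0) 0
    have h10 := congrFun (congrFun h1 1) 0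
    have h11 := congrFun (congrFun h1 1) 1
    simp [Matrix.diagonal] at h00 h10 h11
    exact ⟨h10, by rw [h11, h00]⟩
  · rintro ⟨rfl, h1⟩
    refine ⟨a, by simpa using hac, ?_⟩
    rw [hM, ← h1]
    ext i j
    fin_cases i <;> fin_cases j <;> simp [Matrix.diagonal, hq0]

/-- If `M ^ 2` is scalar then the upper left `2 × 2` block of `M` has trace zero (in
characteristic two). -/
lemma trace_of_sq_mem_ZSet (h2 : (2 : F) = 0)
    (hM : (M : Matrix (Fin 3) (Fin 3) F) = !![a, τ * c ^ q, 0; c, τ * a ^ q, 0; 0, 0, 1])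
    (hM2 : M ^ 2 ∈ ZSet q F) : a = τ * a ^ q := by
  obtain ⟨ε, hε, h1⟩ := hM2
  rw [Units.val_pow_eq_pow_val, hM, sq] at h1
  have h00 := congrFun (congrFun h1 0) 0
  have h11 := congrFun (congrFun h1 1) 1
  simp [Matrix.diagonal, Matrix.mul_apply, Fin.sum_univ_three] at h00 h11
  exact sq_inj_char_two h2 (by linear_combination h00 - h11)

/-- If `M ^ 3` lies in the group of scalars `ZSet` and `M` does not, then the upper left `2 × 2`
block of `M` satisfies `trace ^ 2 = det`. -/
lemma trace_of_cube_mem_ZSet (hq0 : q ≠ 0)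
    (hac : a ^ (q + 1) - c ^ (q + 1) = 1)
    (hM : (M : Matrix (Fin 3) (Fin 3) F) = !![a, τ * c ^ q, 0; c, τ * a ^ q, 0; 0, 0, 1])
    (hM3 : M ^ 3 ∈ ZSet q F) (hM1 : M ∉ ZSet q F) : (a + τ * a ^ q) ^ 2 = τ := by
  rw [mem_ZSet_iff hM hq0 hac] at hM1
  obtain ⟨ε, hε, h1⟩ := hM3
  rw [Units.val_pow_eq_pow_val, hM, pow_succ, sq] at h1
  have h00 := congrFun (congrFun h1 0) 0
  have h10 := congrFun (congrFun h1 1) 0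
  have h11 := congrFun (congrFun h1 1) 1
  simp [Matrix.diagonal, Matrix.mul_apply, Fin.sum_univ_three] at h00 h10 h11
  rw [pow_succ, pow_succ] at hac
  generalize a ^ q = A at *
  by_cases hc : c = 0
  · subst hc
    simp [hq0] at h00 h10 h11 hac
    have h3 : a - τ * A ≠ 0 := fun h4 => hM1 ⟨rfl, sub_eq_zero.1 h4⟩
    have h5 : a ^ 2 + a * (τ * A) + (τ * A) ^ 2 = 0 :=
      mul_left_cancel₀ h3 (by linear_combination h00 - h11)
    linear_combination h5 + τ * hac
  · generalize c ^ q = C at *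
    have h6 : a ^ 2 + a * (τ * A) + τ * C * c + (τ * A) ^ 2 = 0 :=
      mul_left_cancel₀ hc (by linear_combination h10)
    linear_combination h6 + τ * hac

end Scalars

/-! ### Fixed points at infinity -/

section Infinity
variable {F : Type*} [Field F] [Fintype F] {h q : ℕ} {M : GL (Fin 3) F} {a c τ : F}

lemma ncard_infinity_scalar (hF : Fintype.card F = q ^ 2) (hq0 : q ≠ 0)
    (hac : a ^ (q + 1) - c ^ (q + 1) = 1)
    (hM : (M : Matrix (Fin 3) (Fin 3) F) = !![a, τ * c ^ q, 0; c, τ * a ^ q, 0; 0, 0, 1])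
    (hMZ : M ∈ ZSet q F) :
    {u : F | u ^ (q + 1) = 1 ∧ c + τ * a ^ q * u = (a + τ * c ^ q * u) * u}.ncard = q + 1 := by
  obtain ⟨rfl, h1⟩ := (mem_ZSet_iff hM hq0 hac).1 hMZ
  refine Eq.trans (congrArg Set.ncard ?_) (ncard_norm_one (F := F) hF)
  ext u
  simp only [Set.mem_ofPred_eq, and_iff_left_iff_imp]
  intro _
  rw [← h1, zero_pow hq0]
  ring

lemma ncard_infinity_involution (h2 : (2 : F) = 0) (hF : Fintype.card F = q ^ 2) (hq0 : q ≠ 0)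
    (hac : a ^ (q + 1) - c ^ (q + 1) = 1) (hτ : τ ^ (q + 1) = 1)
    (hM : (M : Matrix (Fin 3) (Fin 3) F) = !![a, τ * c ^ q, 0; c, τ * a ^ q, 0; 0, 0, 1])
    (hM2 : M ^ 2 ∈ ZSet q F) (hM1 : M ∉ ZSet q F) :
    {u : F | u ^ (q + 1) = 1 ∧ c + τ * a ^ q * u = (a + τ * c ^ q * u) * u}.ncard = 1 := by
  have hB := trace_of_sq_mem_ZSet h2 hM hM2
  have hc : c ≠ 0 := fun hc => hM1 ((mem_ZSet_iff hM hq0 hac).2 ⟨hc, hB⟩)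
  have hτ0 : τ ≠ 0 := by rintro rfl; simp at hτ
  have hC : c ^ q ≠ 0 := pow_ne_zero _ hc
  have hchar : CharP F 2 := CharTwo.of_one_ne_zero_of_two_eq_zero one_ne_zero h2
  obtain ⟨u, hu⟩ : ∃ u : F, u ^ 2 = c / (τ * c ^ q) := by
    obtain ⟨u, hu⟩ := FiniteField.isSquare_of_char_two (ringChar.eq F 2) (c / (τ * c ^ q))
    exact ⟨u, by rw [sq, hu]⟩
  rw [Set.ncard_eq_one]
  refine ⟨u, ?_⟩
  ext v
  simp only [Set.mem_ofPred_eq, Set.mem_singleton_iff]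
  rw [← hB]
  constructor
  · rintro ⟨-, hv⟩
    apply sq_inj_char_two h2
    rw [hu, eq_div_iff (mul_ne_zero hτ0 hC)]
    linear_combination -hv
  · rintro rfl
    constructor
    · apply sq_inj_char_two h2
      rw [← pow_mul, mul_comm, pow_mul, hu, div_pow, mul_pow, hτ, pow_succ, pow_succ (c ^ q),
        pow_q_pow_q hF, one_mul, one_pow, mul_comm c]
      exact div_self (mul_ne_zero hC hc)
    · rw [eq_div_iff (mul_ne_zero hτ0 hC)] at hu
      linear_combination -hu

variable {B : F}

/-- Here `B` and `τ` are the trace and determinant of the `2 × 2` block. If `B ^ 2 = τ`, the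
normalized entry `α = a / B` satisfies `α ^ q = α + 1` and `α ^ 2 + α + 1 = c ^ (q + 1)`
(in characteristic two). -/
lemma normalized_entry {F : Type*} [Field F] {a c τ B : F} (h2 : (2 : F) = 0)
    (hac : a ^ (q + 1) - c ^ (q + 1) = 1) (hτ : τ ^ (q + 1) = 1)
    (hBd : B = a + τ * a ^ q) (hB : B ^ 2 = τ) :
    B ≠ 0 ∧ B ^ q * B = 1 ∧ (a / B) ^ q = a / B + 1 ∧
      (a / B) ^ 2 + a / B + 1 + c ^ q * c = 0 := by
  have hτ0 : τ ≠ 0 := by rintro rfl; simp at hτ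
  have hB0 : B ≠ 0 := by rintro rfl; simp at hB; exact hτ0 hB.symm
  have hBB : B ^ q * B = 1 := by
    rw [← pow_succ]
    apply sq_inj_char_two h2
    rw [← pow_mul, mul_comm, pow_mul, hB, hτ, one_pow]
  refine ⟨hB0, hBB, ?_, ?_⟩
  · have : (a / B) ^ q = a ^ q * B := by
      rw [div_pow, eq_comm, eq_div_iff (pow_ne_zero _ hB0)]
      linear_combination a ^ q * hBB
    rw [this]
    field_simp
    linear_combination -hBd + a ^ q * hB - a * h2
  · rw [pow_succ, pow_succ] at hac
    field_simp
    linear_combination (1 + c ^ q * c) * hB + a * hBd - τ * hac + (a ^ 2 + a * τ * a ^ q) * h2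

/-- The substitution `z = B * c ^ q * u + a / B` turns the equation for the fixed points
`(1 : u : 0)` into that of the primitive cube roots of unity. -/
lemma cube_root_of_fixed {F : Type*} [Field F] {a c τ B : F} (h2 : (2 : F) = 0) (hc : c ≠ 0)
    (hBd : B = a + τ * a ^ q) (hB : B ^ 2 = τ)
    (hα : (a / B) ^ 2 + a / B + 1 + c ^ q * c = 0) (u : F) :
    c + τ * a ^ q * u = (a + τ * c ^ q * u) * u ↔
      (B * c ^ q * u + a / B) ^ 2 + (B * c ^ q * u + a / B) + 1 = 0 := by
  have hC : c ^ q ≠ 0 := pow_ne_zero _ hc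
  generalize a / B = α at *
  generalize a ^ q = A at *
  generalize c ^ q = C at *
  constructor
  · intro hu
    linear_combination hα + C ^ 2 * u ^ 2 * hB + C * u * hBd - C * hu +
      (B * C * u * α + C * u * τ * A) * h2
  · intro hu
    apply mul_left_cancel₀ hC
    linear_combination hα + C ^ 2 * u ^ 2 * hB + C * u * hBd - hu +
      (B * C * u * α + C * u * τ * A) * h2

lemma exists_cube_root (hq : q = 2 ^ h) (hF : Fintype.card F = q ^ 2) :
    ∃ ω : F, ω ^ 2 + ω + 1 = 0 := by
  have hdvd : 3 ∣ Nat.card Fˣ := by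
    rw [Nat.card_units, Nat.card_eq_fintype_card, hF, hq, ← pow_mul, mul_comm, pow_mul]
    simpa using Nat.sub_dvd_pow_sub_pow 4 1 h
  have : Fact (Nat.Prime 3) := ⟨Nat.prime_three⟩
  obtain ⟨x, hx⟩ := exists_prime_orderOf_dvd_card' 3 hdvd
  have hx3 : (x : F) ^ 3 = 1 := by
    have := pow_orderOf_eq_one x
    rw [hx] at this
    rw [← Units.val_pow_eq_pow_val, this, Units.val_one]
  have hx1 : (x : F) - 1 ≠ 0 := by
    intro h0
    have : x = 1 := Units.ext (sub_eq_zero.1 h0)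
    rw [this, orderOf_one] at hx
    omega
  exact ⟨x, mul_left_cancel₀ hx1 (by linear_combination hx3)⟩

lemma cube_root_pow_even {F : Type*} [Field F] (hq : q = 2 ^ h) (hh : Even h) {z : F}
    (hz : z ^ 2 + z + 1 = 0) : z ^ q = z := by
  obtain ⟨k, rfl⟩ := hh
  rw [hq, ← two_mul, pow_mul]
  clear hq
  induction k with
  | zero => simp
  | succ k ih =>
    rw [pow_succ, pow_mul, ih]
    linear_combination (z ^ 2 - z) * hz

lemma cube_root_pow_odd {F : Type*} [Field F] (h2 : (2 : F) = 0) (hq : q = 2 ^ h) (hh : Odd h) {z : F}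
    (hz : z ^ 2 + z + 1 = 0) : z ^ q = z + 1 := by
  obtain ⟨k, rfl⟩ := hh
  rw [hq, pow_succ, pow_mul, cube_root_pow_even rfl (even_two_mul k) hz]
  linear_combination hz - (z + 1) * h2

/-- When `h` is even, cube roots of unity are fixed by `x ↦ x ^ q`, and both solutions of the
fixed point equation have norm one. -/
lemma ncard_infinity_even (hq : q = 2 ^ h) (h2 : (2 : F) = 0)
    (hF : Fintype.card F = q ^ 2) (hq0 : q ≠ 0) (hh : Even h)
    (hac : a ^ (q + 1) - c ^ (q + 1) = 1) (hτ : τ ^ (q + 1) = 1)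
    (hM : (M : Matrix (Fin 3) (Fin 3) F) = !![a, τ * c ^ q, 0; c, τ * a ^ q, 0; 0, 0, 1])
    (hM3 : M ^ 3 ∈ ZSet q F) (hM1 : M ∉ ZSet q F) :
    {u : F | u ^ (q + 1) = 1 ∧ c + τ * a ^ q * u = (a + τ * c ^ q * u) * u}.ncard = 2 := by
  obtain ⟨B, hBd⟩ : ∃ B, B = a + τ * a ^ q := ⟨_, rfl⟩
  have hB : B ^ 2 = τ := by rw [hBd]; exact trace_of_cube_mem_ZSet hq0 hac hM hM3 hM1
  obtain ⟨hB0, hBB, hαq, hα⟩ := normalized_entry h2 hac hτ hBd hB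
  have hc : c ≠ 0 := by
    rintro rfl
    have h3 := cube_root_pow_even hq hh (z := a / B) (by simpa [hq0] using hα)
    rw [h3] at hαq
    exact one_ne_zero (α := F) (by linear_combination -hαq)
  have hC : c ^ q ≠ 0 := pow_ne_zero _ hc
  have hBC : B * c ^ q ≠ 0 := mul_ne_zero hB0 hC
  obtain ⟨ω, hω⟩ := exists_cube_root hq hF
  have hω1 : (ω + 1) ^ 2 + (ω + 1) + 1 = 0 := by linear_combination hω + (ω + 1) * h2
  have key : ∀ z : F, z ^ 2 + z + 1 = 0 →
      ((z - a / B) / (B * c ^ q)) ^ (q + 1) = 1 := by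
    intro z hz
    have hzq := cube_root_pow_even hq hh hz
    have e1 : (z - a / B) ^ q = z + a / B + 1 := by
      have : z - a / B = z + a / B := by linear_combination -(a / B) * h2
      rw [this, add_pow_q hq h2, hzq, hαq, add_assoc]
    have e2 : (B * c ^ q) ^ (q + 1) = c ^ q * c := by
      rw [pow_succ, mul_pow, pow_q_pow_q hF]
      linear_combination c * c ^ q * hBB
    rw [div_pow, e2, div_eq_one_iff_eq (mul_ne_zero hC hc), pow_succ, e1]
    generalize a / B = α at *
    linear_combination hz - hα
  rw [Set.ncard_eq_two]
  refine ⟨(ω - a / B) / (B * c ^ q), (ω + 1 - a / B) / (B * c ^ q), ?_, ?_⟩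
  · intro h0
    rw [div_left_inj' hBC] at h0
    exact one_ne_zero (α := F) (by linear_combination -h0)
  · ext u
    simp only [Set.mem_ofPred_eq, Set.mem_insert_iff, Set.mem_singleton_iff]
    rw [cube_root_of_fixed h2 hc hBd hB hα, eq_div_iff hBC, eq_div_iff hBC]
    constructor
    · rintro ⟨-, hz⟩
      have h4 : (B * c ^ q * u + a / B - ω) * (B * c ^ q * u + a / B - (ω + 1)) = 0 := by
        generalize B * c ^ q * u + a / B = z at *
        linear_combination hz + hω - (z + z * ω + 1) * h2
      rcases mul_eq_zero.1 h4 with h5 | h5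
      · left; linear_combination h5
      · right; linear_combination h5
    · rintro (h5 | h5)
      · refine ⟨?_, ?_⟩
        · rw [← key ω hω, ← h5]; congr 1; field_simp
        · rw [show B * c ^ q * u + a / B = ω by linear_combination h5]; exact hω
      · refine ⟨?_, ?_⟩
        · rw [← key (ω + 1) hω1, ← h5]; congr 1; field_simp
        · rw [show B * c ^ q * u + a / B = ω + 1 by linear_combination h5]; exact hω1

/-- When `h` is odd, `x ↦ x ^ q` swaps the two primitive cube roots of unity, and no solution of
the fixed point equation has norm one. -/
lemma ncard_infinity_odd (hq : q = 2 ^ h) (h2 : (2 : F) = 0)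
    (hF : Fintype.card F = q ^ 2) (hq0 : q ≠ 0) (hh : Odd h)
    (hac : a ^ (q + 1) - c ^ (q + 1) = 1) (hτ : τ ^ (q + 1) = 1)
    (hM : (M : Matrix (Fin 3) (Fin 3) F) = !![a, τ * c ^ q, 0; c, τ * a ^ q, 0; 0, 0, 1])
    (hM3 : M ^ 3 ∈ ZSet q F) (hM1 : M ∉ ZSet q F) :
    {u : F | u ^ (q + 1) = 1 ∧ c + τ * a ^ q * u = (a + τ * c ^ q * u) * u}.ncard = 0 := by
  obtain ⟨B, hBd⟩ : ∃ B, B = a + τ * a ^ q := ⟨_, rfl⟩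
  have hB : B ^ 2 = τ := by rw [hBd]; exact trace_of_cube_mem_ZSet hq0 hac hM hM3 hM1
  obtain ⟨hB0, hBB, hαq, hα⟩ := normalized_entry h2 hac hτ hBd hB
  rw [Set.ncard_eq_zero, Set.eq_empty_iff_forall_notMem]
  rintro u ⟨hu1, hu⟩
  by_cases hc : c = 0
  · subst hc
    have hu0 : u ≠ 0 := by rintro rfl; simp at hu1
    apply hB0
    rw [zero_pow hq0] at hu
    apply mul_left_cancel₀ hu0
    linear_combination u * hBd - hu + u * τ * a ^ q * h2
  · have hC : c ^ q ≠ 0 := pow_ne_zero _ hc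
    rw [cube_root_of_fixed h2 hc hBd hB hα] at hu
    have hzq := cube_root_pow_odd h2 hq hh hu
    rw [add_pow_q hq h2, hαq, mul_pow, mul_pow, pow_q_pow_q hF] at hzq
    rw [pow_succ] at hu1
    have hv : B ^ q * c * u ^ q = B * c ^ q * u := by linear_combination hzq
    -- the norm of `v = B * c ^ q * u` is both `c ^ (q + 1)` and `v ^ 2`
    have h3 : (B * c ^ q * u) ^ 2 = c ^ q * c := by
      linear_combination -(B * c ^ q * u) * hv + c * c ^ q * u ^ q * u * hBB + c ^ q * c * hu1
    have h4 : B * c ^ q * u = 0 := by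
      generalize B * c ^ q * u = v at *
      generalize a / B = α at *
      linear_combination hu - hα - h3 + (-v * α) * h2
    rw [h4] at h3
    exact mul_ne_zero hC hc (by rw [← h3]; ring)

end Infinity

/-! ### Affine points: the action is free -/

section Free
variable {F : Type*} [Field F] [Fintype F] {h q : ℕ} {M : GL (Fin 3) F} {a c τ : F}

/-- An element fixing an affine point `(x : y : 1)` of the curve also acts on the orthogonal
vector `(y ^ q, x ^ q)`, by the scalar `τ = det M`; hence it is diagonalizable. -/
lemma diagonalize_of_fixed (hq : q = 2 ^ h) (h2 : (2 : F) = 0) (hF : Fintype.card F = q ^ 2)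
    (hτ : τ ^ (q + 1) = 1)
    (hM : (M : Matrix (Fin 3) (Fin 3) F) = !![a, τ * c ^ q, 0; c, τ * a ^ q, 0; 0, 0, 1])
    {x y : F} (hxy : x ^ (q + 1) - y ^ (q + 1) = 1)
    (hfix : glAct M (affinePt (x, y)) = affinePt (x, y)) :
    ∃ P : GL (Fin 3) F, (P : Matrix (Fin 3) (Fin 3) F) = !![x, y ^ q, 0; y, x ^ q, 0; 0, 0, 1] ∧
      (M : Matrix (Fin 3) (Fin 3) F) * P = P * Matrix.diagonal ![1, τ, 1] := by
  rw [glAct_affinePt hM] at hfix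
  obtain ⟨h3, h4⟩ := Prod.mk.inj (affinePt_injective hfix)
  dsimp only at h3 h4
  have h5 := congrArg (· ^ q) h3
  have h6 := congrArg (· ^ q) h4
  simp only [add_pow_q hq h2, mul_pow, pow_q_pow_q hF] at h5 h6
  rw [pow_succ] at hτ
  have hdet : (!![x, y ^ q, 0; y, x ^ q, 0; 0, 0, 1] : Matrix (Fin 3) (Fin 3) F).det ≠ 0 := by
    have : (!![x, y ^ q, 0; y, x ^ q, 0; 0, 0, 1] : Matrix (Fin 3) (Fin 3) F).det = 1 := by
      rw [Matrix.det_fin_three]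
      simp
      linear_combination hxy
    rw [this]; exact one_ne_zero
  refine ⟨Matrix.GeneralLinearGroup.mkOfDetNeZero _ hdet, rfl, ?_⟩
  change (M : Matrix (Fin 3) (Fin 3) F) * !![x, y ^ q, 0; y, x ^ q, 0; 0, 0, 1] =
    !![x, y ^ q, 0; y, x ^ q, 0; 0, 0, 1] * _
  rw [hM]
  ext i j
  fin_cases i <;> fin_cases j <;>
    simp [Matrix.mul_apply, Fin.sum_univ_three, Matrix.diagonal]
  · exact h3
  · linear_combination τ * h6 - a * y ^ q * hτ
  · exact h4
  · linear_combination τ * h5 - c * y ^ q * hτ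

lemma pow_three_eq_one_of_odd_pow {σ : Equiv.Perm (Fin 3)} {n : ℕ} (hn : Odd n) (hσ : σ ^ n = 1) :
    σ ^ 3 = 1 := by
  have h6 : (σ ^ 3) ^ 2 = 1 := by
    rw [← pow_mul]
    have h0 := pow_card_eq_one (x := σ)
    rwa [Fintype.card_perm, Fintype.card_fin] at h0
  obtain ⟨m, rfl⟩ := hn
  have h7 : (σ ^ 3) ^ (2 * m + 1) = 1 := by rw [← pow_mul, mul_comm, pow_mul, hσ, one_pow]
  rwa [pow_succ, pow_mul, h6, one_pow, one_mul] at h7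

lemma exists_conj_mul_self_eq_one (σ : Equiv.Perm (Fin 3)) :
    ∃ ρ : Equiv.Perm (Fin 3), ρ * σ * ρ⁻¹ * σ = 1 := by
  revert σ; decide

/-- Only the identity of `L` fixes an affine point of the curve. -/
lemma eq_one_of_fixed (hq : q = 2 ^ h) (hh : 1 ≤ h) (h2 : (2 : F) = 0)
    (hF : Fintype.card F = q ^ 2) {w : ℕ} (hw3 : ¬ 3 ∣ w)
    (L : Subgroup (GL (Fin 3) F)) (φ : L →* Equiv.Perm (Fin 3)) (hφ : Function.Surjective φ)
    (hker : ∀ x : L, φ x = 1 ↔ (x : GL (Fin 3) F) ∈ ZSet q F)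
    (hcard : Nat.card φ.ker = w) (g : L)
    (hac : a ^ (q + 1) - c ^ (q + 1) = 1) (hτ : τ ^ (q + 1) = 1)
    (hM : ((g : GL (Fin 3) F) : Matrix (Fin 3) (Fin 3) F)
      = !![a, τ * c ^ q, 0; c, τ * a ^ q, 0; 0, 0, 1])
    {x y : F} (hxy : x ^ (q + 1) - y ^ (q + 1) = 1)
    (hfix : glAct (g : GL (Fin 3) F) (affinePt (x, y)) = affinePt (x, y)) : g = 1 := by
  obtain ⟨P, hP, hMP⟩ := diagonalize_of_fixed hq h2 hF hτ hM hxy hfix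
  have hpow : ∀ n : ℕ, ((g : GL (Fin 3) F) : Matrix (Fin 3) (Fin 3) F) ^ n * P
      = P * Matrix.diagonal ![1, τ ^ n, 1] := by
    intro n
    induction n with
    | zero =>
      have : (![1, 1, 1] : Fin 3 → F) = 1 := by ext i; fin_cases i <;> rfl
      simp [this]
    | succ n ih =>
      rw [pow_succ, mul_assoc, hMP, ← mul_assoc, ih, mul_assoc, Matrix.diagonal_mul_diagonal]
      congr 2
      ext i; fin_cases i <;> simp [pow_succ]
  have hone : ∀ n : ℕ, τ ^ n = 1 → g ^ n = 1 := by
    intro n hn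
    have h3 := hpow n
    rw [hn] at h3
    have h4 : (![1, 1, 1] : Fin 3 → F) = 1 := by ext i; fin_cases i <;> rfl
    rw [h4, show Matrix.diagonal (1 : Fin 3 → F) = 1 from Matrix.diagonal_one, mul_one] at h3
    apply Subtype.ext
    apply mul_right_cancel (b := P)
    apply Units.ext
    simpa using h3
  have hqodd : Odd (q + 1) := by
    rw [hq]; exact (Even.pow_of_ne_zero even_two (by omega)).add_one
  have hφ3 : φ (g ^ 3) = 1 := by
    rw [map_pow]
    exact pow_three_eq_one_of_odd_pow hqodd (by rw [← map_pow, hone _ hτ, map_one])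
  -- the cube is scalar, and its eigenvalues are `1` and `τ ^ 3`
  have hτ3 : τ ^ 3 = 1 := by
    obtain ⟨δ, -, hδ⟩ := (hker _).1 hφ3
    have h3 := hpow 3
    rw [← Units.val_pow_eq_pow_val, ← Subgroup.coe_pow, hδ, hP] at h3
    have h00 := congrFun (congrFun h3 0) 0
    have h01 := congrFun (congrFun h3 0) 1
    have h10 := congrFun (congrFun h3 1) 0
    have h11 := congrFun (congrFun h3 1) 1
    simp only [Matrix.diagonal_mul, Matrix.mul_diagonal] at h00 h01 h10 h11
    simp [-mul_eq_right₀, -left_eq_mul₀] at h00 h01 h10 h11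
    rw [pow_succ, pow_succ] at hxy
    have hδ1 : δ = 1 := by
      linear_combination x ^ q * h00 - y ^ q * h10 - (δ - 1) * hxy
    linear_combination -(x * h11 - y * h01) + (δ - τ ^ 3) * hxy + hδ1
  -- some `t` inverts `g` modulo scalars, so `t * g * t⁻¹ * g` is a scalar of `L`; its determinant
  -- is `τ ^ 2`, so in characteristic two the scalar is `τ` itself
  have hτw : τ ^ w = 1 := by
    obtain ⟨ρ, hρ⟩ := exists_conj_mul_self_eq_one (φ g)
    obtain ⟨t, rfl⟩ := hφ ρ
    have hk : φ (t * g * t⁻¹ * g) = 1 := by simpa using hρ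
    obtain ⟨ε, -, hε⟩ := (hker _).1 hk
    have hετ : ε = τ := by
      apply sq_inj_char_two h2
      have h3 := congrArg Matrix.det hε
      have h4 : ((g : GL (Fin 3) F) : Matrix (Fin 3) (Fin 3) F).det = τ := by
        rw [hM, Matrix.det_fin_three]
        simp
        rw [pow_succ, pow_succ] at hac
        linear_combination τ * hac
      have h5 : ((t : GL (Fin 3) F) : Matrix (Fin 3) (Fin 3) F).det *
          (((t : GL (Fin 3) F)⁻¹ : GL (Fin 3) F) : Matrix (Fin 3) (Fin 3) F).det = 1 := by
        rw [← Matrix.det_mul, ← Units.val_mul, mul_inv_cancel, Units.val_one, Matrix.det_one]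
      rw [Subgroup.coe_mul, Subgroup.coe_mul, Subgroup.coe_mul, Subgroup.coe_inv, Units.val_mul,
        Units.val_mul, Units.val_mul, Matrix.det_mul, Matrix.det_mul, Matrix.det_mul, h4,
        Matrix.det_diagonal, Fin.prod_univ_three] at h3
      simp only [Matrix.cons_val_zero, Matrix.cons_val_one, Matrix.cons_val] at h3
      linear_combination -h3 + τ ^ 2 * h5
    have h6 : (⟨t * g * t⁻¹ * g, hk⟩ : φ.ker) ^ w = 1 := by
      rw [← hcard]; exact pow_card_eq_one'
    have h7 := congrArg (fun k : φ.ker => (((k : L) : GL (Fin 3) F) : Matrix (Fin 3) (Fin 3) F)) h6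
    simp only [Subgroup.coe_pow, Units.val_pow_eq_pow_val, hε, Matrix.diagonal_pow] at h7
    have h8 := congrFun (congrFun h7 0) 0
    simpa [hετ] using h8
  have hτ1 : τ ^ 1 = 1 := by
    have hco : Nat.gcd 3 w = 1 := (Nat.Prime.coprime_iff_not_dvd Nat.prime_three).2 hw3
    rw [← hco]
    exact pow_gcd_eq_one.2 ⟨hτ3, hτw⟩
  simpa using hone 1 hτ1

end Free

/-! ### The Burnside sum -/

section Count

lemma sum_perm_three (A e : ℕ) :
    ∑ σ : Equiv.Perm (Fin 3), (if σ = 1 then A else if σ ^ 2 = 1 then 1 else e) = A + 3 + 2 * e := by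
  rw [Finset.sum_ite, Finset.sum_ite, Finset.sum_const, Finset.sum_const, Finset.sum_const]
  have h1 : (Finset.univ.filter (fun σ : Equiv.Perm (Fin 3) => σ = 1)).card = 1 := by decide
  have h2 : ((Finset.univ.filter (fun σ : Equiv.Perm (Fin 3) => ¬ σ = 1)).filter
    (fun σ => σ ^ 2 = 1)).card = 3 := by decide
  have h3 : ((Finset.univ.filter (fun σ : Equiv.Perm (Fin 3) => ¬ σ = 1)).filter
    (fun σ => ¬ σ ^ 2 = 1)).card = 2 := by decide
  rw [h1, h2, h3]
  simp; ring

/-- The Burnside sum: the identity contributes the `q ^ 3 - q` affine points, and an element of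
`L` fixes `q + 1`, `1` or `e` points at infinity according to the order `1`, `2` or `3` of its
image in the symmetric group. -/
lemma numOrbits_formula {F : Type*} [Field F] [Fintype F] {h q w e : ℕ} (hh : 1 ≤ h)
    (hq : q = 2 ^ h) (hF : Fintype.card F = q ^ 2) (hw3 : ¬ 3 ∣ w)
    (he : (Even h ∧ e = 2) ∨ (Odd h ∧ e = 0))
    (L : Subgroup (GL (Fin 3) F)) (hLMl : (L : Set (GL (Fin 3) F)) ⊆ MlSet q F)
    (hZcard : Nat.card ((L : Set (GL (Fin 3) F)) ∩ ZSet q F : Set (GL (Fin 3) F)) = w)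
    (hquot : ∃ φ : ↥L →* Equiv.Perm (Fin 3), Function.Surjective φ ∧
      ∀ x : ↥L, φ x = 1 ↔ (x : GL (Fin 3) F) ∈ ZSet q F) :
    w ≠ 0 ∧ numOrbits L (hermitianPts q F) * (6 * w) = (q ^ 3 - q) + w * (q + 1 + 3 + 2 * e) := by
  classical
  obtain ⟨φ, hφ, hker⟩ := hquot
  have h2 := two_eq_zero_of_card hh hq hF
  have hq1 : 1 < q := by rw [hq]; exact Nat.one_lt_two_pow (by omega)
  have hq0 : q ≠ 0 := by omega
  have := Fintype.ofFinite L
  have hcard : Nat.card φ.ker = w := by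
    rw [← hZcard, Nat.card_coe_set_eq, ← SetLike.coe_sort_coe, Nat.card_coe_set_eq,
      ← Set.ncard_image_of_injective _ Subtype.val_injective]
    congr 1
    ext x
    simp only [Set.mem_image, SetLike.mem_coe, MonoidHom.mem_ker, hker, Subtype.exists,
      exists_and_left, exists_prop, exists_eq_right_right, Set.mem_inter_iff]
    tauto
  have hw0 : w ≠ 0 := by rw [← hcard]; exact Nat.card_pos.ne'
  have hL : Nat.card L = 6 * w := by
    have h3 := φ.ker.card_mul_index
    rw [Subgroup.index_ker, MonoidHom.range_eq_top.2 hφ, hcard, Subgroup.card_top,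
      Nat.card_eq_fintype_card (α := Equiv.Perm (Fin 3)), Fintype.card_perm, Fintype.card_fin] at h3
    rw [← h3, mul_comm]; rfl
  refine ⟨hw0, ?_⟩
  rw [← hL, numOrbits_mul_card L _ (fun g hg x hx => glAct_mem_hermitianPts hq h2 hF (hLMl hg) hx)]
  -- fixed points of a single element, split into the affine and the infinite part
  have hfix : ∀ g : L, {x ∈ hermitianPts q F | glAct (g : GL (Fin 3) F) x = x}.ncard =
      (if g = 1 then q ^ 3 - q else 0) +
        (if φ g = 1 then q + 1 else if φ g ^ 2 = 1 then 1 else e) := by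
    intro g
    obtain ⟨a, c, τ, hac, hτ, hM⟩ := hLMl g.2
    rw [ncard_fixed hM]
    congr 1
    · split_ifs with hg
      · rw [← ncard_affine hq hq1 h2 hF]
        subst hg
        simp [glAct_one]
      · rw [Set.ncard_eq_zero, Set.eq_empty_iff_forall_notMem]
        rintro ⟨x, y⟩ ⟨h3, h4⟩
        exact hg (eq_one_of_fixed hq hh h2 hF hw3 L φ hφ hker hcard g hac hτ hM h3 h4)
    · split_ifs with hg hg2
      · exact ncard_infinity_scalar hF hq0 hac hM ((hker g).1 hg)
      · rw [← map_pow, hker] at hg2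
        rw [hker] at hg
        exact ncard_infinity_involution h2 hF hq0 hac hτ hM hg2 hg
      · have hg3 : φ g ^ 3 = 1 := by
          have : ∀ σ : Equiv.Perm (Fin 3), ¬ σ ^ 2 = 1 → σ ^ 3 = 1 := by decide
          exact this _ hg2
        rw [← map_pow, hker] at hg3
        rw [hker] at hg
        rcases he with ⟨hev, rfl⟩ | ⟨hodd, rfl⟩
        · exact ncard_infinity_even hq h2 hF hq0 hev hac hτ hM hg3 hg
        · exact ncard_infinity_odd hq h2 hF hq0 hodd hac hτ hM hg3 hg
  simp only [hfix]
  rw [Finset.sum_add_distrib, Finset.sum_ite_eq' Finset.univ (1 : L), if_pos (Finset.mem_univ _),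
    ← sum_perm_three (q + 1) e, Finset.mul_sum, ← Finset.sum_fiberwise Finset.univ φ]
  congr 1
  apply Finset.sum_congr rfl
  intro σ _
  have hfiber : (Finset.univ.filter (fun g : L => φ g = σ)).card = w := by
    rw [MonoidHom.card_fiber_eq_of_mem_range φ (hφ σ) (hφ 1), ← hcard, Nat.card_eq_fintype_card,
      Fintype.card_subtype]
    simp only [MonoidHom.mem_ker]
  rw [← hfiber, ← smul_eq_mul, ← Finset.sum_const]
  apply Finset.sum_congr rfl
  intro g hg
  rw [(Finset.mem_filter.1 hg).2]

end Count

theorem stmt5 (h q w : ℕ) (hh : 1 ≤ h) (hq : q = 2 ^ h)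
    (F : Type*) [Field F] [Fintype F] (hF : Fintype.card F = q ^ 2)
    (hw : w ∣ q + 1)
    (L : Subgroup (GL (Fin 3) F)) (hLMl : (L : Set (GL (Fin 3) F)) ⊆ MlSet q F)
    (hZcard : Nat.card ((L : Set (GL (Fin 3) F)) ∩ ZSet q F : Set (GL (Fin 3) F)) = w)
    (hquot : ∃ φ : ↥L →* Equiv.Perm (Fin 3), Function.Surjective φ ∧
      ∀ x : ↥L, φ x = 1 ↔ (x : GL (Fin 3) F) ∈ ZSet q F) :
    (Even h →
      (numOrbits L (hermitianPts q F) : ℚ)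
        = ((q : ℚ) + 8) / 6 + ((q : ℚ) / 2) * (((q : ℚ) - 1) / 3) * (((q : ℚ) + 1) / (w : ℚ))) ∧
    (Odd h → ¬ (3 ∣ w) →
      (numOrbits L (hermitianPts q F) : ℚ)
        = ((q : ℚ) + 4) / 6 + ((q : ℚ) ^ 3 - (q : ℚ)) / (6 * (w : ℚ))) := by
  have key : ∀ N W e : ℕ, W ≠ 0 →
      N * (6 * W) = (q ^ 3 - q) + W * (q + 1 + 3 + 2 * e) →
      (N : ℚ) = ((q : ℚ) + 4 + 2 * e) / 6 + ((q : ℚ) ^ 3 - q) / (6 * (W : ℚ)) := by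
    intro N W e hW hN
    have hW' : (W : ℚ) ≠ 0 := by exact_mod_cast hW
    have hle : q ≤ q ^ 3 := Nat.le_self_pow (by norm_num) q
    have hN' : (N : ℚ) * (6 * W) = ((q : ℚ) ^ 3 - q) + W * (q + 1 + 3 + 2 * e) := by
      rw [← Nat.cast_pow, ← Nat.cast_sub hle]
      exact_mod_cast hN
    field_simp
    linear_combination hN'
  constructor
  · intro hev
    -- `q = 4 ^ k` gives `q + 1 ≡ 2` modulo `3`
    have hw3 : ¬ 3 ∣ w := by
      intro h3
      have h4 := h3.trans hw
      obtain ⟨k, rfl⟩ := hev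
      rw [hq, ← two_mul, pow_mul] at h4
      have h5 : (2 ^ 2) ^ k % 3 = 1 := by rw [Nat.pow_mod]; simp
      omega
    obtain ⟨hw0, hN⟩ := numOrbits_formula hh hq hF hw3 (Or.inl ⟨hev, rfl⟩) L hLMl hZcard hquot
    rw [key _ _ _ hw0 hN]
    have hW' : (w : ℚ) ≠ 0 := by exact_mod_cast hw0
    push_cast
    field_simp
    ring
  · intro hodd hw3
    obtain ⟨hw0, hN⟩ := numOrbits_formula hh hq hF hw3 (Or.inr ⟨hodd, rfl⟩) L hLMl hZcard hquot
    rw [key _ _ _ hw0 hN]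
    simp
end
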